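/- Let α > −1, let M : [0,1] → ℝ be twice continuously differentiable with M(r) > 0 for all r ∈ [0,1] and M(1) = 1, and set μ(z) = M(|z|)(1−|z|²)^α on 𝔻. Define a_n = (∫_𝔻 |z|^{2n}(1−|z|²)^α dA(z))^{−1} and b_n = (∫_𝔻 |z|^{2n} μ(z) dA(z))^{−1}. Let 1 < p < ∞. Then there exists C > 0 such that for every holomorphic f : 𝔻 → ℂ with Taylor expansion f(z) = ∑_{n=0}^∞ f_n zⁿ and ∫_𝔻 |f|^p μ dA < ∞, the series g(z) = ∑_{n=0}^∞ (b_n/a_n) f_n zⁿ converges on 𝔻 to a holomorphic function with ∫_𝔻 |g|^p μ dA ≤ C ∫_𝔻 |f|^p μ dA. -/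

import Mathlib

/-!
Write `λₙ = bₙ / aₙ`. Since `M` is Lipschitz with `M 1 = 1` and bounded below by some `m > 0`,
`|λₙ - 1|` is at most a constant times
`∫ |z|^{2n} (1 - |z|²)^{α+1} dA / ∫ |z|^{2n} (1 - |z|²)^α dA`, and an integration by parts
in the radial variable shows that this ratio is `O(1 / (n + 1))` (`abs_ratio_sub_one_le`).
Hence `eₙ = λₙ - 1` is square summable, so `∑ eₙ e^{2πinθ}` is the Fourier series of a function in
`L²(𝕋) ⊆ L¹(𝕋)`.

The operator `f ↦ ∑ eₙ fₙ zⁿ` is the convolution of `f` with this kernel along circles. As the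
weight is radial, rotations act isometrically on `L^p(μ)`, and Hölder's inequality with Tonelli's
theorem bounds the operator norm by the `L¹` norm of the kernel, hence by `(∑ |eₙ|²)^{1/2}`. This
is carried out for the partial sums of the kernel (`lintegral_sum_le`); Fatou's lemma
passes to the limit. Adding the identity operator gives the multiplier `(λₙ)`.
-/
open MeasureTheory Set Filter Topology
open scoped ENNReal

/-! ### Radial moments -/

/-- Integration of a radial function in polar coordinates. -/
lemma setIntegral_ball_radial (φ : ℝ → ℝ) :
    ∫ z in Metric.ball (0:ℂ) 1, φ ‖z‖ = 2 * Real.pi * ∫ r in (0:ℝ)..1, r * φ r := by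
  have h := integral_fun_norm_addHaar (volume : Measure ℂ) ((Iio (1:ℝ)).indicator φ)
  have h1 : (fun z : ℂ => (Iio (1:ℝ)).indicator φ ‖z‖)
      = (Metric.ball (0:ℂ) 1).indicator (fun z => φ ‖z‖) := by
    ext z
    simp [indicator]
  rw [h1, integral_indicator measurableSet_ball] at h
  rw [h]
  have h2 : (fun y : ℝ => y ^ (Module.finrank ℝ ℂ - 1) • (Iio (1:ℝ)).indicator φ y)
      = (Iio (1:ℝ)).indicator (fun r => r * φ r) := by
    ext y
    simp [indicator, Complex.finrank_real_complex]
  rw [h2, setIntegral_indicator measurableSet_Iio, Ioi_inter_Iio,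
    intervalIntegral.integral_of_le zero_le_one, integral_Ioc_eq_integral_Ioo]
  simp [Complex.finrank_real_complex, Measure.real, Complex.volume_ball]
  ring

lemma hasDerivAt_weight (α : ℝ) (n : ℕ) {r : ℝ} (hr : r ∈ Ioo (0:ℝ) 1) :
    HasDerivAt (fun r : ℝ => r ^ (2 * n) * (1 - r ^ 2) ^ (α + 1))
      ((2 * n : ℕ) * r ^ (2 * n - 1) * (1 - r ^ 2) ^ (α + 1)
        - 2 * (α + 1) * (r * (r ^ (2 * n) * (1 - r ^ 2) ^ α))) r := by
  have hpos : 0 < 1 - r ^ 2 := by nlinarith [hr.1, hr.2]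
  have h1 : HasDerivAt (fun r : ℝ => 1 - r ^ 2) (-(2 * r)) r := by
    simpa using (hasDerivAt_pow 2 r).const_sub 1
  have h2 := h1.rpow_const (p := α + 1) (Or.inl hpos.ne')
  refine ((hasDerivAt_pow (2 * n) r).fun_mul h2).congr_deriv ?_
  rw [add_sub_cancel_right]
  ring

lemma continuous_weight {α : ℝ} (hα : -1 < α) (n : ℕ) :
    Continuous (fun r : ℝ => r ^ (2 * n) * (1 - r ^ 2) ^ (α + 1)) := by
  have : Continuous (fun r : ℝ => (1 - r ^ 2) ^ (α + 1)) :=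
    (by fun_prop : Continuous (fun r : ℝ => 1 - r ^ 2)).rpow_const
      (fun _ => Or.inr (by linarith))
  fun_prop

/-- For `n = 0` the function is, up to a constant factor, the nonnegative derivative of the
continuous function `-(1 - r²)^{α+1}`, hence integrable; for `-1 < α < 0` it is unbounded
near `1`. -/
lemma integrableOn_weight {α : ℝ} (hα : -1 < α) (n : ℕ) :
    IntegrableOn (fun r : ℝ => r * (r ^ (2 * n) * (1 - r ^ 2) ^ α)) (Ioc 0 1) := by
  have h0 : IntegrableOn (fun r : ℝ => 2 * (α + 1) * (r * (1 - r ^ 2) ^ α)) (Ioc 0 1) := by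
    refine intervalIntegral.integrableOn_deriv_of_nonneg
      (g := fun r => - (r ^ (2 * 0) * (1 - r ^ 2) ^ (α + 1)))
      (continuous_weight hα 0).neg.continuousOn
      (fun r hr => by simpa using (hasDerivAt_weight α 0 hr).fun_neg) ?_
    intro r hr
    have hpos : 0 < 1 - r ^ 2 := by nlinarith [hr.1, hr.2]
    have := hr.1
    have : 0 < α + 1 := by linarith
    positivity
  have h1 : IntegrableOn (fun r : ℝ => r * (1 - r ^ 2) ^ α) (Ioc 0 1) := by
    have := h0.const_mul (2 * (α + 1))⁻¹
    refine this.congr (ae_of_all _ fun r => ?_)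
    have : α + 1 ≠ 0 := by linarith
    field_simp
  have h2 := IntegrableOn.continuousOn_mul_of_subset (g := fun r : ℝ => r ^ (2 * n))
    (K := Icc 0 1) (by fun_prop) h1 isCompact_Icc measurableSet_Ioc Ioc_subset_Icc_self
  refine h2.congr_fun (fun r _ => ?_) measurableSet_Ioc
  simp only
  ring

/-- Integration of the derivative of `r^{2n+2} (1 - r²)^{α+1}` over `[0, 1]`. -/
lemma moment_recurrence {α : ℝ} (hα : -1 < α) (n : ℕ) :
    (n + 1 : ℝ) * ∫ r in (0:ℝ)..1, r * (r ^ (2 * n) * (1 - r ^ 2) ^ (α + 1))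
      = (α + 1) * ∫ r in (0:ℝ)..1, r * (r ^ (2 * (n + 1)) * (1 - r ^ 2) ^ α) := by
  have hi1 : IntervalIntegrable (fun r : ℝ => r * (r ^ (2 * n) * (1 - r ^ 2) ^ (α + 1)))
      volume 0 1 := by
    have := continuous_weight hα n
    exact (continuous_id.mul this).intervalIntegrable _ _
  have hi2 : IntervalIntegrable (fun r : ℝ => r * (r ^ (2 * (n + 1)) * (1 - r ^ 2) ^ α))
      volume 0 1 :=
    (intervalIntegrable_iff_integrableOn_Ioc_of_le zero_le_one).2 (integrableOn_weight hα (n + 1))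
  have h := intervalIntegral.integral_eq_sub_of_hasDerivAt_of_le (zero_le_one' ℝ)
    (f := fun r : ℝ => r ^ (2 * (n + 1)) * (1 - r ^ 2) ^ (α + 1))
    (f' := fun r => (2 * (n + 1)) * (r * (r ^ (2 * n) * (1 - r ^ 2) ^ (α + 1)))
      - 2 * (α + 1) * (r * (r ^ (2 * (n + 1)) * (1 - r ^ 2) ^ α)))
    (continuous_weight hα (n + 1)).continuousOn
    (fun r hr => by
      refine (hasDerivAt_weight α (n + 1) hr).congr_deriv ?_
      have : 2 * (n + 1) - 1 = 2 * n + 1 := by omega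
      rw [this]
      push_cast
      ring)
    ((hi1.const_mul _).sub (hi2.const_mul _))
  rw [intervalIntegral.integral_sub (hi1.const_mul _) (hi2.const_mul _),
    intervalIntegral.integral_const_mul, intervalIntegral.integral_const_mul] at h
  have : α + 1 ≠ 0 := by linarith
  simp [this] at h
  linarith

lemma moment_pos {α : ℝ} (hα : -1 < α) (n : ℕ) :
    0 < ∫ r in (0:ℝ)..1, r * (r ^ (2 * n) * (1 - r ^ 2) ^ α) := by
  refine intervalIntegral.intervalIntegral_pos_of_pos_on
    ((intervalIntegrable_iff_integrableOn_Ioc_of_le zero_le_one).2 (integrableOn_weight hα n))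
    (fun r hr => ?_) zero_lt_one
  have hpos : 0 < 1 - r ^ 2 := by nlinarith [hr.1, hr.2]
  have := hr.1
  positivity

/-! ### Convolution with trigonometric polynomials along circles -/

lemma norm_fourier_apply_one (n : ℤ) (θ : AddCircle (1:ℝ)) : ‖(fourier n θ : ℂ)‖ = 1 := by
  rw [fourier_apply]
  exact Circle.norm_coe _

/-- The trigonometric polynomial `∑_{n < N} eₙ e^{2πinθ}` on the circle `ℝ / ℤ`. -/
noncomputable def trigKernel (e : ℕ → ℂ) (N : ℕ) : C(AddCircle (1:ℝ), ℂ) :=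
  ∑ n ∈ Finset.range N, e n • fourier (n : ℤ)

/-- The `L¹` norm on the circle is at most the `L²` norm, which Parseval's identity computes. -/
lemma lintegral_trigKernel_le (e : ℕ → ℂ) (N : ℕ) :
    ∫⁻ θ, ‖trigKernel e N θ‖ₑ ∂(AddCircle.haarAddCircle (T := 1))
      ≤ ENNReal.ofReal (Real.sqrt (∑ n ∈ Finset.range N, ‖e n‖ ^ 2)) := by
  have h12 : eLpNorm (trigKernel e N) 1 (AddCircle.haarAddCircle (T := 1))
      ≤ eLpNorm (trigKernel e N) 2 (AddCircle.haarAddCircle (T := 1)) :=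
    eLpNorm_le_eLpNorm_of_exponent_le (by norm_num)
      (trigKernel e N).continuous.aestronglyMeasurable
  rw [eLpNorm_one_eq_lintegral_enorm] at h12
  refine h12.trans ?_
  set T := ContinuousMap.toLp (E := ℂ) 2 (AddCircle.haarAddCircle (T := 1)) ℂ with hT
  have hcoe : eLpNorm (trigKernel e N) 2 (AddCircle.haarAddCircle (T := 1))
      = ‖T (trigKernel e N)‖ₑ := by
    rw [Lp.enorm_def]
    exact eLpNorm_congr_ae (ContinuousMap.coeFn_toLp _ _).symm
  have hsum : T (trigKernel e N)
      = ∑ n ∈ Finset.range N, e n • fourierLp (T := 1) 2 (n : ℤ) := by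
    simp [trigKernel, hT, fourierLp]
  have horth : Orthonormal ℂ (fun n : ℕ => fourierLp (T := (1:ℝ)) 2 (n : ℤ)) :=
    orthonormal_fourier.comp _ Nat.cast_injective
  have hnorm : ‖T (trigKernel e N)‖ ^ 2 = ∑ n ∈ Finset.range N, ‖e n‖ ^ 2 := by
    have h := horth.inner_sum e e (Finset.range N)
    rw [← hsum, inner_self_eq_norm_sq_to_K] at h
    have h2 : ∀ n, (starRingEnd ℂ) (e n) * e n = ((‖e n‖ ^ 2 : ℝ) : ℂ) := fun n => by
      rw [mul_comm, Complex.mul_conj, Complex.normSq_eq_norm_sq]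
    simp_rw [h2] at h
    have h3 := congrArg Complex.re h
    rw [← Complex.ofReal_sum, Complex.ofReal_re] at h3
    rw [← h3]
    norm_cast
  rw [hcoe, ← hnorm, Real.sqrt_sq (norm_nonneg _), ofReal_norm]

lemma integral_fourier_mul_trigKernel (e : ℕ → ℂ) (N k : ℕ) :
    ∫ θ, fourier (-(k:ℤ)) θ * trigKernel e N θ ∂(AddCircle.haarAddCircle (T := 1))
      = if k < N then e k else 0 := by
  have h0 : ∀ n : ℤ, ∫ θ, fourier (-(k:ℤ)) θ * fourier n θ ∂(AddCircle.haarAddCircle (T := 1))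
      = if n = k then 1 else 0 := by
    intro n
    have := congrFun (fourierCoeff_fourier (T := (1:ℝ)) n) k
    simp only [fourierCoeff, smul_eq_mul] at this
    rw [this]
    simp [Pi.single_apply, eq_comm]
  have hK : ∀ θ, fourier (-(k:ℤ)) θ * trigKernel e N θ
      = ∑ n ∈ Finset.range N, e n * (fourier (-(k:ℤ)) θ * fourier (n:ℤ) θ) := by
    intro θ
    simp only [trigKernel, ContinuousMap.coe_sum, Finset.sum_apply, ContinuousMap.coe_smul, Pi.smul_apply, smul_eq_mul,
      Finset.mul_sum]
    exact Finset.sum_congr rfl fun n _ => by ring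
  simp_rw [hK]
  rw [integral_finsetSum]
  · simp_rw [integral_const_mul, h0]
    simp
  · intro n _
    refine Continuous.integrable_of_hasCompactSupport (by fun_prop) ?_
    exact HasCompactSupport.of_compactSpace _

lemma summable_norm_of_hasSum_ball {f : ℂ → ℂ} {c : ℕ → ℂ}
    (hf : ∀ z ∈ Metric.ball (0:ℂ) 1, HasSum (fun n : ℕ => c n * z ^ n) (f z))
    {r : ℝ} (hr0 : 0 ≤ r) (hr1 : r < 1) : Summable (fun n => ‖c n‖ * r ^ n) := by
  have h := (hf r (by simpa [abs_of_nonneg hr0] using hr1)).summable.norm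
  simpa [abs_of_nonneg hr0] using h

/-- The truncated multiplier applied to `f` is the convolution of `f` with the kernel along the
circle through `z`. -/
lemma sum_eq_integral_trigKernel {f : ℂ → ℂ} {c : ℕ → ℂ}
    (hf : ∀ z ∈ Metric.ball (0:ℂ) 1, HasSum (fun n : ℕ => c n * z ^ n) (f z))
    (e : ℕ → ℂ) (N : ℕ) {z : ℂ} (hz : z ∈ Metric.ball (0:ℂ) 1) :
    ∑ n ∈ Finset.range N, e n * c n * z ^ n
      = ∫ θ, f (fourier (-1) θ * z) * trigKernel e N θ ∂(AddCircle.haarAddCircle (T := 1)) := by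
  have hz' : ‖z‖ < 1 := by simpa using hz
  have hsum := summable_norm_of_hasSum_ball hf (norm_nonneg z) hz'
  have hu : ∀ θ : AddCircle (1:ℝ), ‖(fourier (-1) θ : ℂ)‖ = 1 := norm_fourier_apply_one _
  have hpow : ∀ (n : ℕ) (θ : AddCircle (1:ℝ)),
      (fourier (-1) θ : ℂ) ^ n = fourier (-(n:ℤ)) θ := by
    intro n θ
    rw [fourier_apply, fourier_apply, ← Circle.coe_pow, ← AddCircle.toCircle_nsmul,
      ← natCast_zsmul, smul_smul]
    simp
  set F : ℕ → AddCircle (1:ℝ) → ℂ := fun n θ =>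
    (c n * z ^ n) * (fourier (-(n:ℤ)) θ * trigKernel e N θ) with hF
  have hint : ∀ n, Integrable (F n) (AddCircle.haarAddCircle (T := 1)) := fun n =>
    Continuous.integrable_of_hasCompactSupport (by fun_prop) (HasCompactSupport.of_compactSpace _)
  have hFnorm : ∀ n, ∫ θ, ‖F n θ‖ ∂(AddCircle.haarAddCircle (T := 1))
      = (‖c n‖ * ‖z‖ ^ n) * ∫ θ, ‖trigKernel e N θ‖ ∂(AddCircle.haarAddCircle (T := 1)) := by
    intro n
    rw [← integral_const_mul]
    refine integral_congr_ae (ae_of_all _ fun θ => ?_)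
    simp only [hF, norm_mul, norm_pow, norm_fourier_apply_one, one_mul]
  have h := hasSum_integral_of_summable_integral_norm hint (by
    simp_rw [hFnorm]
    exact hsum.mul_right _)
  have hts : ∀ θ, ∑' n, F n θ = f (fourier (-1) θ * z) * trigKernel e N θ := by
    intro θ
    have h1 := (hf (fourier (-1) θ * z) (by rw [mem_ball_zero_iff, norm_mul, hu, one_mul]; exact hz')).mul_right (trigKernel e N θ)
    rw [← h1.tsum_eq]
    refine tsum_congr fun n => ?_
    rw [hF, mul_pow, hpow]
    ring
  simp_rw [hts] at h
  have h2 : ∀ n, ∫ θ, F n θ ∂(AddCircle.haarAddCircle (T := 1))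
      = if n < N then e n * c n * z ^ n else 0 := by
    intro n
    simp only [hF]
    rw [integral_const_mul, integral_fourier_mul_trigKernel]
    split_ifs
    · ring
    · simp
  simp_rw [h2] at h
  have h3 : HasSum (fun n => if n < N then e n * c n * z ^ n else 0)
      (∑ n ∈ Finset.range N, if n < N then e n * c n * z ^ n else 0) :=
    hasSum_sum_of_ne_finset_zero (fun n hn => by simp_all)
  rw [h.unique h3]
  exact Finset.sum_congr rfl fun n hn => (if_pos (Finset.mem_range.1 hn)).symm

/-- Hölder's inequality with respect to the measure with density `k`, in integrated form. -/
lemma rpow_lintegral_mul_le {X : Type*} [MeasurableSpace X] (ν : Measure X) {p : ℝ} (hp : 1 < p)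
    {F k : X → ℝ≥0∞} (hF : Measurable F) (hk : Measurable k) :
    (∫⁻ x, F x * k x ∂ν) ^ p ≤ (∫⁻ x, F x ^ p * k x ∂ν) * (∫⁻ x, k x ∂ν) ^ (p - 1) := by
  have hp0 : 0 < p := by linarith
  have hpq := Real.HolderConjugate.conjExponent hp
  set q := p.conjExponent
  have hq0 : 0 < q := hpq.symm.pos
  have hsplit : ∀ t : ℝ≥0∞, t = t ^ (1 / p) * t ^ (1 / q) := fun t => by
    rw [← ENNReal.rpow_add_of_nonneg _ _ (by positivity) (by positivity), one_div, one_div,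
      hpq.inv_add_inv_eq_one, ENNReal.rpow_one]
  have h := ENNReal.lintegral_mul_le_Lp_mul_Lq ν hpq
    (f := fun x => F x * k x ^ (1 / p)) (g := fun x => k x ^ (1 / q))
    (by fun_prop) (by fun_prop)
  have e1 : ∀ x, (F x * k x ^ (1 / p)) ^ p = F x ^ p * k x := fun x => by
    rw [ENNReal.mul_rpow_of_nonneg _ _ hp0.le, ← ENNReal.rpow_mul, one_div_mul_cancel hp0.ne',
      ENNReal.rpow_one]
  have e2 : ∀ x, (k x ^ (1 / q)) ^ q = k x := fun x => by
    rw [← ENNReal.rpow_mul, one_div_mul_cancel hq0.ne', ENNReal.rpow_one]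
  have e3 : ∀ x, ((fun x => F x * k x ^ (1 / p)) * fun x => k x ^ (1 / q)) x = F x * k x :=
    fun x => by
      simp only [Pi.mul_apply]
      rw [mul_assoc, ← hsplit]
  simp only [e1, e2, e3] at h
  calc (∫⁻ x, F x * k x ∂ν) ^ p
      ≤ ((∫⁻ x, F x ^ p * k x ∂ν) ^ (1 / p) * (∫⁻ x, k x ∂ν) ^ (1 / q)) ^ p :=
        ENNReal.rpow_le_rpow h hp0.le
    _ = _ := by
        rw [ENNReal.mul_rpow_of_nonneg _ _ hp0.le, ← ENNReal.rpow_mul, ← ENNReal.rpow_mul,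
          one_div_mul_cancel hp0.ne', ENNReal.rpow_one]
        congr 2
        rw [one_div, inv_mul_eq_div, hpq.div_conj_eq_sub_one]

lemma lintegral_rotate {G : ℂ → ℝ≥0∞} (hG : Measurable G) {u : ℂ} (hu : ‖u‖ = 1) :
    ∫⁻ z, G (u * z) = ∫⁻ z, G z := by
  have := (rotation ⟨u, by simpa [Submonoid.unitSphere] using hu⟩).measurePreserving.lintegral_comp hG
  exact this

/-- The truncated multiplier is bounded on the weighted Bergman space of any rotation-invariant
weight `w`, with norm at most the `ℓ²` norm of the truncated sequence. -/
lemma lintegral_sum_le {f : ℂ → ℂ} {c : ℕ → ℂ} (hfc : ContinuousOn f (Metric.ball 0 1))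
    (hf : ∀ z ∈ Metric.ball (0:ℂ) 1, HasSum (fun n : ℕ => c n * z ^ n) (f z))
    {w : ℂ → ℝ≥0∞} (hw : Measurable w) (hrot : ∀ u z : ℂ, ‖u‖ = 1 → w (u * z) = w z)
    {p : ℝ} (hp : 1 < p) (e : ℕ → ℂ) (N : ℕ) :
    ∫⁻ z in Metric.ball (0:ℂ) 1, ‖∑ n ∈ Finset.range N, e n * c n * z ^ n‖ₑ ^ p * w z
      ≤ ENNReal.ofReal (Real.sqrt (∑ n ∈ Finset.range N, ‖e n‖ ^ 2)) ^ p *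
        ∫⁻ z in Metric.ball (0:ℂ) 1, ‖f z‖ₑ ^ p * w z := by
  classical
  have hp0 : 0 < p := by linarith
  set ν := AddCircle.haarAddCircle (T := (1:ℝ))
  set B := Metric.ball (0:ℂ) 1 with hB
  -- `f` is unconstrained outside the disc; extension by zero makes it measurable
  set F : ℂ → ℝ≥0∞ := fun z => ‖B.piecewise f 0 z‖ₑ with hFdef
  have hF : Measurable F :=
    (hfc.measurable_piecewise continuousOn_const measurableSet_ball).enorm
  have hFB : ∀ z ∈ B, F z = ‖f z‖ₑ := fun z hz => by simp [hFdef, hz]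
  have hF0 : ∀ z ∉ B, F z = 0 := fun z hz => by simp [hFdef, hz]
  set k : AddCircle (1:ℝ) → ℝ≥0∞ := fun θ => ‖trigKernel e N θ‖ₑ with hkdef
  have hk : Measurable k := (trigKernel e N).continuous.measurable.enorm
  set κ := ∫⁻ θ, k θ ∂ν with hκ
  set u : AddCircle (1:ℝ) → ℂ := fun θ => fourier (-1) θ with hudef
  have hum : Measurable u := (fourier (T := (1:ℝ)) (-1)).continuous.measurable
  have hu : ∀ θ, ‖u θ‖ = 1 := norm_fourier_apply_one _
  have huB : ∀ θ z, z ∈ B → u θ * z ∈ B := fun θ z hz => by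
    rw [hB, mem_ball_zero_iff, norm_mul, hu, one_mul]; simpa [hB] using hz
  have hpt : ∀ z ∈ B, ‖∑ n ∈ Finset.range N, e n * c n * z ^ n‖ₑ ^ p * w z
      ≤ κ ^ (p - 1) * ∫⁻ θ, F (u θ * z) ^ p * k θ * w z ∂ν := by
    intro z hz
    have h1 : ‖∑ n ∈ Finset.range N, e n * c n * z ^ n‖ₑ ≤ ∫⁻ θ, F (u θ * z) * k θ ∂ν := by
      rw [sum_eq_integral_trigKernel hf e N hz]
      refine (enorm_integral_le_lintegral_enorm _).trans_eq (lintegral_congr fun θ => ?_)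
      rw [enorm_mul, hFB _ (huB θ z hz)]
    have h2 := rpow_lintegral_mul_le ν hp (F := fun θ => F (u θ * z)) (k := k)
      (by fun_prop) hk
    rw [lintegral_mul_const _ (by fun_prop), ← mul_assoc]
    gcongr
    rw [mul_comm]
    exact (ENNReal.rpow_le_rpow h1 hp0.le).trans h2
  calc ∫⁻ z in B, ‖∑ n ∈ Finset.range N, e n * c n * z ^ n‖ₑ ^ p * w z
      ≤ ∫⁻ z in B, κ ^ (p - 1) * ∫⁻ θ, F (u θ * z) ^ p * k θ * w z ∂ν :=
        setLIntegral_mono' measurableSet_ball hpt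
    _ ≤ ∫⁻ z, κ ^ (p - 1) * ∫⁻ θ, F (u θ * z) ^ p * k θ * w z ∂ν :=
        setLIntegral_le_lintegral _ _
    _ = κ ^ (p - 1) * ∫⁻ z, ∫⁻ θ, F (u θ * z) ^ p * k θ * w z ∂ν := by
        refine lintegral_const_mul _ ?_
        exact Measurable.lintegral_prod_right' (f := fun x : ℂ × AddCircle (1:ℝ) =>
          F (u x.2 * x.1) ^ p * k x.2 * w x.1) (by fun_prop)
    _ = κ ^ (p - 1) * ∫⁻ θ, (∫⁻ z, F (u θ * z) ^ p * k θ * w z) ∂ν := by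
        congr 1
        exact lintegral_lintegral_swap (by
          refine Measurable.aemeasurable ?_
          simp only [Function.uncurry_def]
          fun_prop)
    _ = κ ^ (p - 1) * ∫⁻ θ, k θ * (∫⁻ z, F z ^ p * w z) ∂ν := by
        congr 1
        refine lintegral_congr fun θ => ?_
        rw [← lintegral_rotate (G := fun z => F z ^ p * w z) (by fun_prop) (hu θ),
          ← lintegral_const_mul _ (by fun_prop)]
        refine lintegral_congr fun z => ?_
        rw [hrot _ _ (hu θ)]
        ring
    _ = κ ^ p * ∫⁻ z, F z ^ p * w z := by
        rw [lintegral_mul_const _ hk, ← mul_assoc, ← hκ]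
        congr 1
        nth_rewrite 2 [← ENNReal.rpow_one κ]
        rw [← ENNReal.rpow_add_of_nonneg _ _ (by linarith) zero_le_one, sub_add_cancel]
    _ = κ ^ p * ∫⁻ z in B, ‖f z‖ₑ ^ p * w z := by
        congr 1
        rw [← lintegral_indicator measurableSet_ball]
        refine lintegral_congr fun z => ?_
        by_cases hz : z ∈ B
        · rw [indicator_of_mem hz, hFB z hz]
        · rw [indicator_of_notMem hz, hF0 z hz, ENNReal.zero_rpow_of_pos hp0, zero_mul]
    _ ≤ _ := by
        gcongr
        exact lintegral_trigKernel_le e N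

/-! ### The multiplier sequence and the conclusion -/

/-- The ratio `bₙ / aₙ` differs from `1` by `O(1 / (n + 1))`. -/
lemma abs_ratio_sub_one_le {α : ℝ} (hα : -1 < α) {M : ℝ → ℝ} (hMc : ContinuousOn M (Icc 0 1))
    {m L : ℝ} (hm : 0 < m) (hmM : ∀ r ∈ Icc (0:ℝ) 1, m ≤ M r)
    (hL : ∀ r ∈ Icc (0:ℝ) 1, |M r - 1| ≤ L * (1 - r)) (hL0 : 0 ≤ L) (n : ℕ) :
    |(∫ z in Metric.ball (0:ℂ) 1, ‖z‖ ^ (2 * n) * (M ‖z‖ * (1 - ‖z‖ ^ 2) ^ α))⁻¹ /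
      (∫ z in Metric.ball (0:ℂ) 1, ‖z‖ ^ (2 * n) * (1 - ‖z‖ ^ 2) ^ α)⁻¹ - 1|
      ≤ L * (α + 1) / m * (1 / (n + 1)) := by
  rw [setIntegral_ball_radial (fun r => r ^ (2 * n) * (M r * (1 - r ^ 2) ^ α)),
    setIntegral_ball_radial (fun r => r ^ (2 * n) * (1 - r ^ 2) ^ α)]
  have hA := moment_pos hα n
  have hrec := moment_recurrence hα n
  have hint : ∀ n, IntervalIntegrable (fun r : ℝ => r * (r ^ (2 * n) * (1 - r ^ 2) ^ α)) volume 0 1 :=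
    fun n => (intervalIntegrable_iff_integrableOn_Ioc_of_le zero_le_one).2 (integrableOn_weight hα n)
  have hintM : IntervalIntegrable
      (fun r : ℝ => r * (r ^ (2 * n) * (M r * (1 - r ^ 2) ^ α))) volume 0 1 := by
    refine ((hint n).mul_continuousOn (g := M) (by rwa [uIcc_of_le zero_le_one])).congr ?_
    intro r _
    ring
  have hintD : IntervalIntegrable (fun r : ℝ => r * (r ^ (2 * n) * (1 - r ^ 2) ^ (α + 1)))
      volume 0 1 :=
    (continuous_id.mul (continuous_weight hα n)).intervalIntegrable _ _
  -- the weight is nonnegative on `[0,1]`, endpoints included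
  have hw0 : ∀ r ∈ Icc (0:ℝ) 1, ∀ n : ℕ, 0 ≤ r * (r ^ (2 * n) * (1 - r ^ 2) ^ α) := by
    intro r hr n
    have h1 : 0 ≤ 1 - r ^ 2 := by nlinarith [hr.1, hr.2]
    have := hr.1
    positivity
  set A := ∫ r in (0:ℝ)..1, r * (r ^ (2 * n) * (1 - r ^ 2) ^ α)
  set A' := ∫ r in (0:ℝ)..1, r * (r ^ (2 * (n + 1)) * (1 - r ^ 2) ^ α) with hA'
  set B := ∫ r in (0:ℝ)..1, r * (r ^ (2 * n) * (M r * (1 - r ^ 2) ^ α)) with hB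
  set D := ∫ r in (0:ℝ)..1, r * (r ^ (2 * n) * (1 - r ^ 2) ^ (α + 1))
  have hBA : m * A ≤ B := by
    rw [← intervalIntegral.integral_const_mul]
    refine intervalIntegral.integral_mono_on zero_le_one ((hint n).const_mul m) hintM ?_
    intro r hr
    calc m * (r * (r ^ (2 * n) * (1 - r ^ 2) ^ α))
        ≤ M r * (r * (r ^ (2 * n) * (1 - r ^ 2) ^ α)) :=
          mul_le_mul_of_nonneg_right (hmM r hr) (hw0 r hr n)
      _ = _ := by ring
  have hA'A : A' ≤ A := by
    refine intervalIntegral.integral_mono_on zero_le_one (hint _) (hint _) ?_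
    intro r hr
    have h1 : 0 ≤ 1 - r ^ 2 := by nlinarith [hr.1, hr.2]
    have := hr.1
    have h2 : r ^ (2 * (n + 1)) ≤ r ^ (2 * n) :=
      pow_le_pow_of_le_one hr.1 hr.2 (by omega)
    gcongr
  have hdiff : |A - B| ≤ L * D := by
    rw [abs_sub_comm, ← intervalIntegral.integral_sub hintM (hint n),
      ← intervalIntegral.integral_const_mul, ← Real.norm_eq_abs]
    refine intervalIntegral.norm_integral_le_of_norm_le zero_le_one ?_ (hintD.const_mul L)
    refine ae_of_all _ fun r hr => ?_
    have hr' : r ∈ Icc (0:ℝ) 1 := Ioc_subset_Icc_self hr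
    -- at `r = 1` the factorization of `(1 - r²)^{α+1}` may fail by the conventions for `0 ^ α`
    rcases eq_or_lt_of_le hr.2 with h1 | h1
    · have hα1 : α + 1 ≠ 0 := by linarith
      have hM1 : M 1 = 1 := by
        have := hL 1 (by simp)
        simp only [sub_self, mul_zero, abs_nonpos_iff] at this
        linarith
      subst h1
      simp [hα1, hM1]
    have h2 : 0 < 1 - r ^ 2 := by nlinarith [hr.1]
    have e1 : r * (r ^ (2 * n) * (M r * (1 - r ^ 2) ^ α)) - r * (r ^ (2 * n) * (1 - r ^ 2) ^ α)
        = (M r - 1) * (r * (r ^ (2 * n) * (1 - r ^ 2) ^ α)) := by ring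
    rw [e1, Real.norm_eq_abs, abs_mul, abs_of_nonneg (hw0 r hr' n)]
    calc |M r - 1| * (r * (r ^ (2 * n) * (1 - r ^ 2) ^ α))
        ≤ (L * (1 - r ^ 2)) * (r * (r ^ (2 * n) * (1 - r ^ 2) ^ α)) := by
          refine mul_le_mul_of_nonneg_right ((hL r hr').trans ?_) (hw0 r hr' n)
          refine mul_le_mul_of_nonneg_left ?_ hL0
          nlinarith [hr.1, hr.2]
      _ = _ := by
          rw [Real.rpow_add_one h2.ne']
          ring
  have hn : (0:ℝ) < n + 1 := by positivity
  have hα1 : 0 < α + 1 := by linarith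
  have hD : D ≤ (α + 1) * A / (n + 1) := by
    rw [le_div_iff₀ hn, mul_comm, hrec]
    exact mul_le_mul_of_nonneg_left hA'A hα1.le
  have hBpos : 0 < B := lt_of_lt_of_le (mul_pos hm hA) hBA
  have hpi : 0 < 2 * Real.pi := by positivity
  have e : (2 * Real.pi * B)⁻¹ / (2 * Real.pi * A)⁻¹ - 1 = (A - B) / B := by
    field_simp
  rw [e, abs_div, abs_of_pos hBpos, div_le_iff₀ hBpos]
  calc |A - B| ≤ L * ((α + 1) * A / (n + 1)) := hdiff.trans (mul_le_mul_of_nonneg_left hD hL0)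
    _ = L * (α + 1) / m * (1 / (n + 1)) * (m * A) := by field_simp
    _ ≤ _ := mul_le_mul_of_nonneg_left hBA (by positivity)

/-- With `μ(z) = M(|z|)(1−|z|²)^α` and Bergman coefficients `a_n, b_n` of
`(1−|z|²)^α` and `μ`, the coefficient multiplier operator of the sequence `(b_n/a_n)` is
bounded on the weighted Bergman space `A^p(μ)`. -/
theorem stmt13 (α : ℝ) (hα : -1 < α) (M : ℝ → ℝ)
    (hM : ContDiffOn ℝ 2 M (Set.Icc 0 1))
    (hMpos : ∀ r ∈ Set.Icc (0:ℝ) 1, 0 < M r) (hM1 : M 1 = 1)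
    (μ : ℂ → ℝ) (hμ : ∀ z : ℂ, μ z = M ‖z‖ * (1 - ‖z‖ ^ 2) ^ α)
    (a b : ℕ → ℝ)
    (ha : ∀ n : ℕ,
      a n = (∫ z in Metric.ball (0:ℂ) 1, ‖z‖ ^ (2 * n) * (1 - ‖z‖ ^ 2) ^ α)⁻¹)
    (hb : ∀ n : ℕ, b n = (∫ z in Metric.ball (0:ℂ) 1, ‖z‖ ^ (2 * n) * μ z)⁻¹)
    (p : ℝ) (hp : 1 < p) :
    ∃ C : ℝ, 0 < C ∧ ∀ (f : ℂ → ℂ) (c : ℕ → ℂ),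
      DifferentiableOn ℂ f (Metric.ball 0 1) →
      (∀ z ∈ Metric.ball (0:ℂ) 1, HasSum (fun n : ℕ => c n * z ^ n) (f z)) →
      (∫⁻ z in Metric.ball (0:ℂ) 1, ENNReal.ofReal (‖f z‖ ^ p * μ z)) < ⊤ →
      ∃ g : ℂ → ℂ, DifferentiableOn ℂ g (Metric.ball 0 1) ∧
        (∀ z ∈ Metric.ball (0:ℂ) 1,
          HasSum (fun n : ℕ => ((b n / a n : ℝ) : ℂ) * c n * z ^ n) (g z)) ∧
        (∫⁻ z in Metric.ball (0:ℂ) 1, ENNReal.ofReal (‖g z‖ ^ p * μ z))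
          ≤ ENNReal.ofReal C *
            ∫⁻ z in Metric.ball (0:ℂ) 1, ENNReal.ofReal (‖f z‖ ^ p * μ z) := by
  classical
  have hp0 : 0 < p := by linarith
  have hMc : ContinuousOn M (Icc 0 1) := hM.continuousOn
  obtain ⟨r₀, hr₀, hmin⟩ := isCompact_Icc.exists_isMinOn ⟨(0:ℝ), by simp⟩ hMc
  obtain ⟨L, hLip⟩ := hM.exists_lipschitzOnWith (by norm_num) (convex_Icc 0 1) isCompact_Icc
  have hL : ∀ r ∈ Icc (0:ℝ) 1, |M r - 1| ≤ L * (1 - r) := by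
    intro r hr
    have h := hLip.dist_le_mul r hr 1 (by simp)
    rwa [hM1, Real.dist_eq, Real.dist_eq, abs_sub_comm r 1,
      abs_of_nonneg (sub_nonneg.2 hr.2)] at h
  set K : ℝ := L * (α + 1) / M r₀ with hK
  have hK0 : 0 ≤ K := by
    have := hMpos r₀ hr₀
    have : 0 < α + 1 := by linarith
    positivity
  set e : ℕ → ℂ := fun n => ((b n / a n - 1 : ℝ) : ℂ) with he
  have hebd : ∀ n, ‖e n‖ ≤ K * (1 / (n + 1)) := by
    intro n
    rw [he, Complex.norm_real, Real.norm_eq_abs, ha, hb]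
    simp_rw [hμ]
    exact abs_ratio_sub_one_le hα hMc (hMpos r₀ hr₀) (fun r hr => hmin hr) hL L.2 n
  have hebd' : ∀ n, ‖e n‖ ≤ K := fun n => (hebd n).trans <| by
    refine mul_le_of_le_one_right hK0 ?_
    rw [div_le_one (by positivity)]
    linarith [(Nat.cast_nonneg n : (0:ℝ) ≤ n)]
  have hesum : Summable (fun n => ‖e n‖ ^ 2) := by
    have h1 : Summable (fun n : ℕ => 1 / ((n : ℝ) + 1) ^ 2) := by
      have := (summable_nat_add_iff 1).2 (Real.summable_one_div_nat_pow.2 one_lt_two)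
      simpa using this
    refine Summable.of_nonneg_of_le (fun n => by positivity) (fun n => ?_) (h1.mul_left (K ^ 2))
    calc ‖e n‖ ^ 2 ≤ (K * (1 / (n + 1))) ^ 2 := pow_le_pow_left₀ (norm_nonneg _) (hebd n) 2
      _ = _ := by rw [mul_pow K, one_div_pow]
  set E : ℝ := Real.sqrt (∑' n, ‖e n‖ ^ 2) with hE
  have hE0 : 0 ≤ E := Real.sqrt_nonneg _
  refine ⟨2 ^ (p - 1) * (1 + E ^ p), by positivity, ?_⟩
  intro f c hfd hf _
  set B := Metric.ball (0:ℂ) 1 with hBdef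
  -- the weight, cut off outside the disc, as a measurable function
  set w : ℂ → ℝ≥0∞ := fun z => ENNReal.ofReal (B.piecewise μ 0 z) with hw
  have hμc : ContinuousOn μ B := by
    have h1 : ContinuousOn (fun z : ℂ => M ‖z‖ * (1 - ‖z‖ ^ 2) ^ α) B := by
      refine ContinuousOn.mul (hMc.comp continuous_norm.continuousOn ?_) ?_
      · intro z hz
        exact ⟨norm_nonneg z, (mem_ball_zero_iff.1 hz).le⟩
      · refine ContinuousOn.rpow_const (by fun_prop) fun z hz => Or.inl ?_
        have := mem_ball_zero_iff.1 hz
        nlinarith [norm_nonneg z]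
    exact h1.congr fun z _ => hμ z
  have hwm : Measurable w :=
    (hμc.measurable_piecewise continuousOn_const measurableSet_ball).ennreal_ofReal
  have hrot : ∀ u z : ℂ, ‖u‖ = 1 → w (u * z) = w z := by
    intro u z hu
    have h1 : ‖u * z‖ = ‖z‖ := by rw [norm_mul, hu, one_mul]
    simp only [hw, piecewise, hBdef, mem_ball_zero_iff, h1, hμ, Pi.zero_apply]
  have hconv : ∀ g : ℂ → ℂ, (∫⁻ z in B, ENNReal.ofReal (‖g z‖ ^ p * μ z))
      = ∫⁻ z in B, ‖g z‖ₑ ^ p * w z := by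
    intro g
    refine setLIntegral_congr_fun measurableSet_ball fun z hz => ?_
    simp only [hw, piecewise_eq_of_mem _ _ _ hz]
    rw [ENNReal.ofReal_mul (by positivity), ← ENNReal.ofReal_rpow_of_nonneg (norm_nonneg _) hp0.le,
      ofReal_norm]
  -- `h = ∑ eₙ cₙ zⁿ` is the difference `g - f`
  set h : ℂ → ℂ := fun z => ∑' n, e n * c n * z ^ n with hh
  have hterm : ∀ (r : ℝ) (z : ℂ), ‖z‖ ≤ r → ∀ n, ‖e n * c n * z ^ n‖ ≤ K * (‖c n‖ * r ^ n) := by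
    intro r z hz n
    rw [norm_mul, norm_mul, norm_pow, mul_assoc]
    have := hebd' n
    gcongr
  have hsum : ∀ z ∈ B, HasSum (fun n => e n * c n * z ^ n) (h z) := by
    intro z hz
    have hz' := mem_ball_zero_iff.1 hz
    exact (Summable.of_norm_bounded
      ((summable_norm_of_hasSum_ball hf (norm_nonneg z) hz').mul_left K)
      (hterm _ z le_rfl)).hasSum
  have hhd : DifferentiableOn ℂ h B := by
    intro z hz
    obtain ⟨r, hzr, hr1⟩ := exists_between (mem_ball_zero_iff.1 hz)
    have h1 : DifferentiableOn ℂ h (Metric.ball 0 r) :=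
      Complex.differentiableOn_tsum_of_summable_norm
        ((summable_norm_of_hasSum_ball hf ((norm_nonneg z).trans hzr.le) hr1).mul_left K)
        (fun n => by fun_prop) Metric.isOpen_ball
        (fun n v hv => hterm r v (mem_ball_zero_iff.1 hv).le n)
    exact (h1.differentiableAt
      (Metric.isOpen_ball.mem_nhds (mem_ball_zero_iff.2 hzr))).differentiableWithinAt
  have hhle : ∫⁻ z in B, ‖h z‖ₑ ^ p * w z
      ≤ ENNReal.ofReal E ^ p * ∫⁻ z in B, ‖f z‖ₑ ^ p * w z := by
    set S : ℕ → ℂ → ℝ≥0∞ := fun N z =>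
      ‖∑ n ∈ Finset.range N, e n * c n * z ^ n‖ₑ ^ p * w z with hS
    have hSle : ∀ N, ∫⁻ z in B, S N z
        ≤ ENNReal.ofReal E ^ p * ∫⁻ z in B, ‖f z‖ₑ ^ p * w z := by
      intro N
      refine (lintegral_sum_le hfd.continuousOn hf hwm hrot hp e N).trans ?_
      gcongr
      exact Real.sqrt_le_sqrt (hesum.sum_le_tsum _ (fun n _ => by positivity))
    have hlim : ∀ z ∈ B, ‖h z‖ₑ ^ p * w z = liminf (fun N => S N z) atTop := by
      intro z hz
      refine (Tendsto.liminf_eq ?_).symm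
      refine ENNReal.Tendsto.mul_const ?_ (Or.inr ENNReal.ofReal_ne_top)
      exact ((hsum z hz).tendsto_sum_nat.enorm).ennrpow_const p
    rw [setLIntegral_congr_fun measurableSet_ball hlim]
    refine (lintegral_liminf_le fun N => by fun_prop).trans ?_
    exact (liminf_le_liminf (Eventually.of_forall hSle)).trans_eq (liminf_const _)
  refine ⟨fun z => f z + h z, hfd.add hhd, ?_, ?_⟩
  · intro z hz
    refine ((hf z hz).add (hsum z hz)).congr_fun fun n => ?_
    simp only [he]
    push_cast
    ring
  rw [hconv f, hconv (fun z => f z + h z)]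
  calc ∫⁻ z in B, ‖f z + h z‖ₑ ^ p * w z
      ≤ ∫⁻ z in B, 2 ^ (p - 1) * (‖f z‖ₑ ^ p * w z + ‖h z‖ₑ ^ p * w z) := by
        refine lintegral_mono fun z => ?_
        rw [← add_mul, ← mul_assoc]
        gcongr
        exact (ENNReal.rpow_le_rpow (enorm_add_le _ _) hp0.le).trans
          (ENNReal.rpow_add_le_mul_rpow_add_rpow _ _ hp.le)
    _ = 2 ^ (p - 1) * (∫⁻ z in B, ‖f z‖ₑ ^ p * w z + ‖h z‖ₑ ^ p * w z) :=
        lintegral_const_mul' _ _ (by finiteness)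
    _ = 2 ^ (p - 1) * ((∫⁻ z in B, ‖f z‖ₑ ^ p * w z) + ∫⁻ z in B, ‖h z‖ₑ ^ p * w z) := by
        rw [lintegral_add_left']
        exact ((hfd.continuousOn.aemeasurable measurableSet_ball).enorm.pow_const p).mul
          hwm.aemeasurable
    _ ≤ 2 ^ (p - 1) * ((∫⁻ z in B, ‖f z‖ₑ ^ p * w z)
          + ENNReal.ofReal E ^ p * ∫⁻ z in B, ‖f z‖ₑ ^ p * w z) := by
        gcongr
    _ = _ := by
        rw [ENNReal.ofReal_mul (by positivity), ENNReal.ofReal_add zero_le_one (by positivity),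
          ENNReal.ofReal_one, ← ENNReal.ofReal_rpow_of_nonneg hE0 hp0.le,
          ← ENNReal.ofReal_rpow_of_pos two_pos, ENNReal.ofReal_ofNat]
        ring
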